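/- arXiv:1612.00889 — 3 statements merged into one kernel-verified Lean document; each statement's English description precedes it below -/
import Mathlib

section
/- Let ε ∈ (0,1], μ > 0, and let a, b ≥ 0. If |a − b|_{μ/2} ≤ ε/9, i.e. |a − b| / (a + b + μ/2) ≤ ε/9, then: (1) if a ≥ μ then (1 − ε)·a ≤ b ≤ (1 + ε)·a, and (2) if a < μ then b ≤ (1 + ε)·μ. -/
/-!
Since `b ≤ a + |a - b|`, a bound `|a - b| ≤ δ (a + b + ν)` can be solved for `|a - b|`:
it gives `(1 - δ) |a - b| ≤ δ (2 a + ν)`. For `ν = μ / 2` the right-hand side is at most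
`δ (5 / 2) max a μ`, so `δ = ε / (ε + 5 / 2)` yields `|a - b| ≤ ε max a μ`, and this threshold is
attained at `a = μ`, `b = (1 + ε) μ`. For `ε ≤ 1` it is at least `ε / 9`.
-/

section NuDist

variable {𝕜 : Type*} [Field 𝕜] [LinearOrder 𝕜] {ν δ ε c M μ a b : 𝕜}

/-- The `ν`-distance `|a - b|_ν`, meant for `a, b ≥ 0` and `ν > 0`; where `a + b + ν = 0` it
takes the junk value `0`. -/
def nuDist (ν a b : 𝕜) : 𝕜 := |a - b| / (a + b + ν)

variable [IsStrictOrderedRing 𝕜]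

lemma nuDist_le_iff (hs : 0 < a + b + ν) :
    nuDist ν a b ≤ δ ↔ |a - b| ≤ δ * (a + b + ν) :=
  div_le_iff₀ hs

lemma one_sub_mul_abs_sub_le_of_nuDist_le (hs : 0 < a + b + ν) (hδ : 0 ≤ δ)
    (h : nuDist ν a b ≤ δ) : (1 - δ) * |a - b| ≤ δ * (2 * a + ν) := by
  have hb : b ≤ a + |a - b| := by linarith [neg_abs_le (a - b)]
  have habs : |a - b| ≤ δ * (2 * a + ν + |a - b|) :=
    calc |a - b| ≤ δ * (a + b + ν) := (nuDist_le_iff hs).mp h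
      _ ≤ δ * (2 * a + ν + |a - b|) := mul_le_mul_of_nonneg_left (by linarith) hδ
  linarith

lemma abs_sub_le_mul_of_nuDist_le (hs : 0 < a + b + ν) (hε : 0 ≤ ε) (hc : 0 < c)
    (h : nuDist ν a b ≤ ε / (ε + c)) (hM : 2 * a + ν ≤ c * M) : |a - b| ≤ ε * M := by
  have hεc : 0 < ε + c := by positivity
  have hone_sub : 1 - ε / (ε + c) = c / (ε + c) := by
    rw [one_sub_div hεc.ne', add_sub_cancel_left]
  have hsolved := one_sub_mul_abs_sub_le_of_nuDist_le hs (by positivity) h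
  rw [hone_sub, div_mul_eq_mul_div, div_mul_eq_mul_div, div_le_div_iff_of_pos_right hεc] at hsolved
  refine le_of_mul_le_mul_left ?_ hc
  calc c * |a - b| ≤ ε * (2 * a + ν) := hsolved
    _ ≤ ε * (c * M) := mul_le_mul_of_nonneg_left hM hε
    _ = c * (ε * M) := mul_left_comm ε c M

lemma abs_sub_le_mul_max_of_nuDist_half_le (hs : 0 < a + b + μ / 2) (hε : 0 ≤ ε)
    (h : nuDist (μ / 2) a b ≤ ε / (ε + 5 / 2)) : |a - b| ≤ ε * max a μ :=
  abs_sub_le_mul_of_nuDist_le hs hε (by norm_num) h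
    (by linarith [le_max_left a μ, le_max_right a μ])

theorem relative_eps_approximation_general (hε : 0 ≤ ε) (hμ : 0 < μ) (ha : 0 ≤ a) (hb : 0 ≤ b)
    (h : nuDist (μ / 2) a b ≤ ε / (ε + 5 / 2)) :
    (a ≥ μ → (1 - ε) * a ≤ b ∧ b ≤ (1 + ε) * a) ∧ (a < μ → b ≤ (1 + ε) * μ) := by
  have hab := abs_sub_le_iff.mp (abs_sub_le_mul_max_of_nuDist_half_le (by positivity) hε h)
  refine ⟨fun hμa ↦ ?_, fun haμ ↦ ?_⟩
  · rw [max_eq_left hμa] at hab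
    constructor <;> linarith
  · rw [max_eq_right haμ.le] at hab
    linarith

end NuDist

/-- Corollary (iii) (relative ε-approximation): for `a, b ≥ 0`, `μ > 0` and `ε ∈ (0,1]`,
if `|a − b| / (a + b + μ/2) ≤ ε/9` then (1) `a ≥ μ` implies `(1−ε)a ≤ b ≤ (1+ε)a`,
and (2) `a < μ` implies `b ≤ (1+ε)μ`. -/
theorem relative_eps_approximation (ε μ a b : ℝ) (hε : 0 < ε) (hε1 : ε ≤ 1)
    (hμ : 0 < μ) (ha : 0 ≤ a) (hb : 0 ≤ b)
    (h : |a - b| / (a + b + μ/2) ≤ ε / 9) :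
    (a ≥ μ → (1 - ε) * a ≤ b ∧ b ≤ (1 + ε) * a) ∧ (a < μ → b ≤ (1 + ε) * μ) := by
  have hthreshold : ε / 9 ≤ ε / (ε + 5 / 2) := by gcongr; linarith
  exact relative_eps_approximation_general hε.le hμ ha hb (h.trans hthreshold)
end

section
/- Let ρ ≥ 1 and let (X, D) be a ρ-metric space. Let P ⊆ X be a finite set, k ≥ 1 an integer, and let p ↦ p' be a map from P into a finite set B ⊆ X such that Σ_{q∈P} D(q, q') ≤ ᾱ·OPT_k(P), where ᾱ ≥ 0, and assume Σ_{q∈P} D(q, q') > 0. For p ∈ P let P(p) := {q ∈ P : q' = p'} be the cluster of p. Then for every p ∈ P and every subset Z ⊆ X with 1 ≤ |Z| ≤ k such that Σ_{q∈P} D(q, Z) > 0, one has D(p, Z) / Σ_{q∈P} D(q, Z) ≤ ρ·ᾱ·D(p, p') / Σ_{q∈P} D(q, q') + ρ²·(ᾱ + 1) / |P(p)|. In particular, the sensitivity s(p) := max over such Z of D(p,Z)/Σ_{q∈P} D(q,Z) is bounded by the right-hand side. -/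
open Finset

/-- Distance from a point to a finite set of centers: `D(x,C) = min_{c ∈ C} D(x,c)`. -/
noncomputable def distToSet {X : Type*} (D : X → X → ℝ) (x : X) (C : Finset X) : ℝ :=
  sInf ((fun c => D x c) '' C)

/-- `OPT_k(P)`: the minimum over all center sets `Z ⊆ X` with `1 ≤ |Z| ≤ k` of the
clustering cost `∑_{p ∈ P} D(p, Z)`. -/
noncomputable def OPTk {X : Type*} (D : X → X → ℝ) (P : Finset X) (k : ℕ) : ℝ :=
  sInf { c : ℝ | ∃ Z : Finset X, Z.Nonempty ∧ Z.card ≤ k ∧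
    c = ∑ p ∈ P, distToSet D p Z }

/-!
Pass from `p` to its center `p'`: `D(p,Z) ≤ ρ (D(p,p') + D(p',Z))`. The first summand, divided by
the cost of `Z`, is at most `ᾱ D(p,p')` divided by the cost of `q ↦ q'`. For the second, each `q`
in the cluster of `p` gives `D(p',Z) ≤ ρ (D(q,q') + D(q,Z))`; averaging over the cluster and then
enlarging the sum to all of `P` bounds `D(p',Z)` by `ρ (ᾱ + 1) / |P(p)|` times the cost of `Z`.
-/

section

variable {X : Type*} {D : X → X → ℝ} {ρ : ℝ}

lemma exists_distToSet_eq (D : X → X → ℝ) (x : X) {Z : Finset X} (hZ : Z.Nonempty) :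
    ∃ z ∈ Z, distToSet D x Z = D x z := by
  obtain ⟨z, hz, h⟩ := (hZ.to_set.image (D x)).csInf_mem (Z.finite_toSet.image _)
  exact ⟨z, hz, h.symm⟩

lemma distToSet_le (D : X → X → ℝ) (x : X) {Z : Finset X} {z : X} (hz : z ∈ Z) :
    distToSet D x Z ≤ D x z :=
  csInf_le (Z.finite_toSet.image _).bddBelow ⟨z, hz, rfl⟩

lemma distToSet_nonneg {x : X} (hnonneg : ∀ y, 0 ≤ D x y) (Z : Finset X) :
    0 ≤ distToSet D x Z := by
  refine Real.sInf_nonneg ?_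
  rintro _ ⟨z, -, rfl⟩
  exact hnonneg z

lemma OPTk_le_sum_distToSet (hnonneg : ∀ x y, 0 ≤ D x y) (P : Finset X) {k : ℕ} {Z : Finset X}
    (hZ : Z.Nonempty) (hZk : Z.card ≤ k) : OPTk D P k ≤ ∑ q ∈ P, distToSet D q Z := by
  refine csInf_le ⟨0, ?_⟩ ⟨Z, hZ, hZk, rfl⟩
  rintro _ ⟨W, -, -, rfl⟩
  exact sum_nonneg fun q _ => distToSet_nonneg (hnonneg q) W

lemma nonneg_of_le_mul_add (hnonneg : ∀ x y, 0 ≤ D x y)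
    (htri : ∀ x y z, D x z ≤ ρ * (D x y + D y z)) {x y : X} (hxy : 0 < D x y) : 0 ≤ ρ :=
  nonneg_of_mul_nonneg_left ((hnonneg x x).trans (htri x y x))
    (add_pos_of_pos_of_nonneg hxy (hnonneg y x))

lemma distToSet_le_mul_add (htri : ∀ x y z, D x z ≤ ρ * (D x y + D y z)) (x y : X)
    {Z : Finset X} (hZ : Z.Nonempty) : distToSet D x Z ≤ ρ * (D x y + distToSet D y Z) := by
  obtain ⟨z, hz, h⟩ := exists_distToSet_eq D y hZ
  rw [h]
  exact (distToSet_le D x hz).trans (htri x y z)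

lemma card_mul_distToSet_le (htri : ∀ x y z, D x z ≤ ρ * (D x y + D y z)) (Q : Finset X) (b : X)
    {Z : Finset X} (hZ : Z.Nonempty) :
    (Q.card : ℝ) * distToSet D b Z ≤ ρ * (∑ q ∈ Q, D b q + ∑ q ∈ Q, distToSet D q Z) := by
  rw [← nsmul_eq_mul, ← sum_add_distrib, mul_sum]
  exact card_nsmul_le_sum _ _ _ fun q _ => distToSet_le_mul_add htri b q hZ

lemma card_filter_mul_distToSet_le [DecidableEq X] (hρ : 0 ≤ ρ) (hsymm : ∀ x y, D x y = D y x)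
    (hnonneg : ∀ x y, 0 ≤ D x y) (htri : ∀ x y z, D x z ≤ ρ * (D x y + D y z))
    (P : Finset X) (π : X → X) (b : X) {Z : Finset X} (hZ : Z.Nonempty) :
    ((P.filter fun q => π q = b).card : ℝ) * distToSet D b Z ≤
      ρ * (∑ q ∈ P, D q (π q) + ∑ q ∈ P, distToSet D q Z) := by
  have hconn : ∑ q ∈ P with π q = b, D b q ≤ ∑ q ∈ P, D q (π q) :=
    calc ∑ q ∈ P with π q = b, D b q
        = ∑ q ∈ P with π q = b, D q (π q) :=
          sum_congr rfl fun q hq => by rw [(mem_filter.1 hq).2, hsymm]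
      _ ≤ ∑ q ∈ P, D q (π q) :=
          sum_le_sum_of_subset_of_nonneg (filter_subset _ _) fun q _ _ => hnonneg q (π q)
  have hquery : ∑ q ∈ P with π q = b, distToSet D q Z ≤ ∑ q ∈ P, distToSet D q Z :=
    sum_le_sum_of_subset_of_nonneg (filter_subset _ _) fun q _ _ => distToSet_nonneg (hnonneg q) Z
  exact (card_mul_distToSet_le htri _ b hZ).trans
    (mul_le_mul_of_nonneg_left (add_le_add hconn hquery) hρ)

lemma distToSet_div_sum_le [DecidableEq X] (hρ : 0 ≤ ρ) (hsymm : ∀ x y, D x y = D y x)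
    (hnonneg : ∀ x y, 0 ≤ D x y) (htri : ∀ x y z, D x z ≤ ρ * (D x y + D y z))
    {P : Finset X} {π : X → X} {abar : ℝ} {b : X} {Z : Finset X} (hZ : Z.Nonempty)
    (hcost : ∑ q ∈ P, D q (π q) ≤ abar * ∑ q ∈ P, distToSet D q Z)
    (hpos : 0 < ∑ q ∈ P, distToSet D q Z) (hb : (P.filter fun q => π q = b).Nonempty) :
    distToSet D b Z / (∑ q ∈ P, distToSet D q Z) ≤
      ρ * (abar + 1) / ((P.filter fun q => π q = b).card : ℝ) := by
  rw [div_le_div_iff₀ hpos (Nat.cast_pos.2 hb.card_pos), mul_comm (distToSet D b Z)]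
  calc ((P.filter fun q => π q = b).card : ℝ) * distToSet D b Z
      ≤ ρ * (∑ q ∈ P, D q (π q) + ∑ q ∈ P, distToSet D q Z) :=
        card_filter_mul_distToSet_le hρ hsymm hnonneg htri P π b hZ
    _ ≤ ρ * (abar * ∑ q ∈ P, distToSet D q Z + ∑ q ∈ P, distToSet D q Z) := by gcongr
    _ = ρ * (abar + 1) * ∑ q ∈ P, distToSet D q Z := by ring

theorem sensitivity_bound_general [DecidableEq X] (hsymm : ∀ x y, D x y = D y x)
    (hnonneg : ∀ x y, 0 ≤ D x y) (htri : ∀ x y z, D x z ≤ ρ * (D x y + D y z))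
    {P : Finset X} {π : X → X} {abar : ℝ} {Z : Finset X} (hZ : Z.Nonempty)
    (hcost : ∑ q ∈ P, D q (π q) ≤ abar * ∑ q ∈ P, distToSet D q Z)
    (hπpos : 0 < ∑ q ∈ P, D q (π q)) {p : X} (hp : p ∈ P) :
    distToSet D p Z / (∑ q ∈ P, distToSet D q Z) ≤
      ρ * abar * D p (π p) / (∑ q ∈ P, D q (π q)) +
        ρ ^ 2 * (abar + 1) / ((P.filter fun q => π q = π p).card : ℝ) := by
  obtain ⟨r, -, hr⟩ : ∃ r ∈ P, 0 < D r (π r) :=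
    exists_lt_of_sum_lt (by simpa only [sum_const_zero] using hπpos)
  have hρ : 0 ≤ ρ := nonneg_of_le_mul_add hnonneg htri hr
  set C := ∑ q ∈ P, D q (π q)
  set S := ∑ q ∈ P, distToSet D q Z
  set m : ℝ := ((P.filter fun q => π q = π p).card : ℝ)
  have hS_nonneg : 0 ≤ S := sum_nonneg fun q _ => distToSet_nonneg (hnonneg q) Z
  have habarS : 0 < abar * S := hπpos.trans_le hcost
  have hS : 0 < S := pos_of_mul_pos_right habarS (pos_of_mul_pos_left habarS hS_nonneg).le
  have hinv : 1 / S ≤ abar / C := by rwa [div_le_div_iff₀ hS hπpos, one_mul]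
  have hcenter : distToSet D (π p) Z / S ≤ ρ * (abar + 1) / m :=
    distToSet_div_sum_le hρ hsymm hnonneg htri hZ hcost hS ⟨p, mem_filter.2 ⟨hp, rfl⟩⟩
  have hd : 0 ≤ D p (π p) := hnonneg p (π p)
  calc distToSet D p Z / S
      ≤ ρ * (D p (π p) + distToSet D (π p) Z) / S := by
        gcongr
        exact distToSet_le_mul_add htri p (π p) hZ
    _ = ρ * D p (π p) * (1 / S) + ρ * (distToSet D (π p) Z / S) := by ring
    _ ≤ ρ * D p (π p) * (abar / C) + ρ * (ρ * (abar + 1) / m) := by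
        gcongr ρ * D p (π p) * ?_ + ρ * ?_
    _ = ρ * abar * D p (π p) / C + ρ ^ 2 * (abar + 1) / m := by ring

end

/-- Sensitivity bound (Lemma `sensbound`, unweighted): if `p ↦ p'` is a map from `P` into
a finite set `B` with connection cost at most `ᾱ·OPT_k(P)`, then for every `p ∈ P` and every
query `Z` with `1 ≤ |Z| ≤ k`,
`D(p,Z) / ∑_q D(q,Z) ≤ ρ·ᾱ·D(p,p') / ∑_q D(q,q') + ρ²·(ᾱ+1) / |P(p)|`,
where `P(p) = {q ∈ P : q' = p'}` is the cluster of `p`.  In particular the sensitivity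
`s(p)` is bounded by the right-hand side. -/
theorem sensitivity_bound {X : Type*} [DecidableEq X] (D : X → X → ℝ) (ρ : ℝ) (hρ1 : 1 ≤ ρ)
    (hsymm : ∀ x y, D x y = D y x) (hnonneg : ∀ x y, 0 ≤ D x y)
    (htri : ∀ x y z, D x z ≤ ρ * (D x y + D y z))
    (P : Finset X) (k : ℕ) (hk : 1 ≤ k)
    (B : Finset X) (π : X → X) (abar : ℝ) (habar : 0 ≤ abar)
    (hπB : ∀ p ∈ P, π p ∈ B)
    (hπcost : ∑ q ∈ P, D q (π q) ≤ abar * OPTk D P k)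
    (hπpos : 0 < ∑ q ∈ P, D q (π q)) :
    ∀ p ∈ P, ∀ Z : Finset X, Z.Nonempty → Z.card ≤ k →
      0 < (∑ q ∈ P, distToSet D q Z) →
      distToSet D p Z / (∑ q ∈ P, distToSet D q Z) ≤
        ρ * abar * D p (π p) / (∑ q ∈ P, D q (π q)) +
          ρ ^ 2 * (abar + 1) / ((P.filter fun q => π q = π p).card : ℝ) :=
  fun _ hp _ hZ hZk _ => sensitivity_bound_general hsymm hnonneg htri hZ
    (hπcost.trans (mul_le_mul_of_nonneg_left (OPTk_le_sum_distToSet hnonneg P hZ hZk) habar))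
    hπpos hp
end

section
/- Let r > 0 and let D̃ : [0,∞) → [0,∞) be a monotone non-decreasing function satisfying the Log-Log Lipschitz condition: D̃(Δ·x) ≤ Δ^r·D̃(x) for every x > 0 and every Δ > 1. Let (X, dist) be a metric space and define D(x,y) := D̃(dist(x,y)) for all x, y ∈ X. Then (X, D) is a ρ-metric space for ρ = max{2^{r−1}, 1}; that is, D(x,z) ≤ ρ·(D(x,y) + D(y,z)) for all x, y, z ∈ X. -/
open Real

/- The Log-Log Lipschitz condition says exactly that `x ↦ D̃ x / x ^ r` is nonincreasing on
`(0, ∞)`. Hence `t = D̃ (a + b) / (a + b) ^ r` satisfies `t * a ^ r ≤ D̃ a` and `t * b ^ r ≤ D̃ b`,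
so that the inequality `(a + b) ^ r ≤ ρ * (a ^ r + b ^ r)`, multiplied by `t`, bounds `D̃ (a + b)`
by `ρ * (D̃ a + D̃ b)`. Monotonicity carries this over to distances via the triangle inequality. -/

/-- The `r`-Log-Log Lipschitz condition on `f : [0, ∞) → [0, ∞)`, the growth bound imposed on the
function applied to a metric. Such an `f` is encoded as a function on `ℝ`, whose values at negative
arguments are unconstrained. -/
def IsLogLogLipschitz (r : ℝ) (f : ℝ → ℝ) : Prop :=
  ∀ x : ℝ, 0 < x → ∀ Δ : ℝ, 1 < Δ → f (Δ * x) ≤ Δ ^ r * f x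

theorem add_rpow_le_max_mul_rpow_add_rpow {a b : ℝ} (ha : 0 < a) (hb : 0 < b) (r : ℝ) :
    (a + b) ^ r ≤ max ((2 : ℝ) ^ (r - 1)) 1 * (a ^ r + b ^ r) := by
  have hsum : 0 ≤ a ^ r + b ^ r := by positivity
  rcases le_total r 1 with hr1 | hr1
  · have hsubadd : (a + b) ^ r ≤ a ^ r + b ^ r := by
      rcases le_total 0 r with hr0 | hr0
      · exact Real.rpow_add_le_add_rpow ha.le hb.le hr0 hr1
      · exact (rpow_le_rpow_of_nonpos ha (le_add_of_nonneg_right hb.le) hr0).trans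
          (le_add_of_nonneg_right (rpow_nonneg hb.le r))
    exact hsubadd.trans (le_mul_of_one_le_left hsum (le_max_right _ _))
  · have hconvex : (a + b) ^ r ≤ (2 : ℝ) ^ (r - 1) * (a ^ r + b ^ r) := by
      lift a to NNReal using ha.le
      lift b to NNReal using hb.le
      exact_mod_cast NNReal.rpow_add_le_mul_rpow_add_rpow a b hr1
    exact hconvex.trans (mul_le_mul_of_nonneg_right (le_max_left _ _) hsum)

namespace IsLogLogLipschitz

variable {r a b : ℝ} {f : ℝ → ℝ}

theorem antitoneOn_div_rpow (hf : IsLogLogLipschitz r f) :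
    AntitoneOn (fun x ↦ f x / x ^ r) (Set.Ioi 0) := by
  intro a (ha : 0 < a) c (hc : 0 < c) hac
  rcases hac.eq_or_lt with rfl | hac
  · rfl
  have hdilate : f c ≤ (c / a) ^ r * f a := by
    simpa only [div_mul_cancel₀ c ha.ne'] using hf a ha (c / a) ((one_lt_div ha).2 hac)
  calc f c / c ^ r ≤ (c / a) ^ r * f a / c ^ r := by gcongr
    _ = f a / a ^ r := by
        rw [div_rpow hc.le ha.le]
        field_simp

theorem apply_add_le_of_pos (hf : IsLogLogLipschitz r f) (ha : 0 < a) (hb : 0 < b)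
    (hfab : 0 ≤ f (a + b)) :
    f (a + b) ≤ max ((2 : ℝ) ^ (r - 1)) 1 * (f a + f b) := by
  have hab : 0 < a + b := add_pos ha hb
  set t := f (a + b) / (a + b) ^ r
  have hta : t * a ^ r ≤ f a := (le_div_iff₀ (rpow_pos_of_pos ha r)).1
    (hf.antitoneOn_div_rpow ha hab (le_add_of_nonneg_right hb.le))
  have htb : t * b ^ r ≤ f b := (le_div_iff₀ (rpow_pos_of_pos hb r)).1
    (hf.antitoneOn_div_rpow hb hab (le_add_of_nonneg_left ha.le))
  calc f (a + b) = t * (a + b) ^ r := (div_mul_cancel₀ _ (rpow_pos_of_pos hab r).ne').symm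
    _ ≤ t * (max ((2 : ℝ) ^ (r - 1)) 1 * (a ^ r + b ^ r)) := by
        gcongr
        exact add_rpow_le_max_mul_rpow_add_rpow ha hb r
    _ = max ((2 : ℝ) ^ (r - 1)) 1 * (t * a ^ r + t * b ^ r) := by ring
    _ ≤ max ((2 : ℝ) ^ (r - 1)) 1 * (f a + f b) := by gcongr

theorem apply_add_le (hf : IsLogLogLipschitz r f) (hnonneg : ∀ x : ℝ, 0 ≤ x → 0 ≤ f x)
    (ha : 0 ≤ a) (hb : 0 ≤ b) :
    f (a + b) ≤ max ((2 : ℝ) ^ (r - 1)) 1 * (f a + f b) := by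
  have hfa := hnonneg a ha
  have hfb := hnonneg b hb
  have hle_max : f a + f b ≤ max ((2 : ℝ) ^ (r - 1)) 1 * (f a + f b) :=
    le_mul_of_one_le_left (add_nonneg hfa hfb) (le_max_right _ _)
  rcases ha.eq_or_lt with rfl | ha
  · simpa only [zero_add] using (le_add_of_nonneg_left hfa).trans hle_max
  rcases hb.eq_or_lt with rfl | hb
  · simpa only [add_zero] using (le_add_of_nonneg_right hfb).trans hle_max
  exact hf.apply_add_le_of_pos ha hb (hnonneg _ (add_pos ha hb).le)

end IsLogLogLipschitz

theorem logLogLipschitz_rho_metric_general {X : Type*} [PseudoMetricSpace X] {r : ℝ} {f : ℝ → ℝ}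
    (hnonneg : ∀ x : ℝ, 0 ≤ x → 0 ≤ f x) (hmono : MonotoneOn f (Set.Ici 0))
    (hf : IsLogLogLipschitz r f) (x y z : X) :
    f (dist x z) ≤ max ((2 : ℝ) ^ (r - 1)) 1 * (f (dist x y) + f (dist y z)) :=
  calc f (dist x z) ≤ f (dist x y + dist y z) :=
        hmono dist_nonneg (add_nonneg dist_nonneg dist_nonneg) (dist_triangle x y z)
    _ ≤ max ((2 : ℝ) ^ (r - 1)) 1 * (f (dist x y) + f (dist y z)) :=
        hf.apply_add_le hnonneg dist_nonneg dist_nonneg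

/-- Lemma (Log-Log Lipschitz implies ρ-metric): if `D̃ : [0,∞) → [0,∞)` is monotone
non-decreasing and satisfies `D̃(Δx) ≤ Δ^r·D̃(x)` for all `x > 0`, `Δ > 1`, then for a metric
space `(X, dist)`, the function `D(x,y) = D̃(dist x y)` satisfies the relaxed triangle
inequality `D(x,z) ≤ ρ·(D(x,y) + D(y,z))` with `ρ = max (2^(r−1)) 1`. -/
theorem logLogLipschitz_rho_metric {X : Type*} [MetricSpace X]
    (r : ℝ) (hr : 0 < r) (Dt : ℝ → ℝ)
    (hnonneg : ∀ x : ℝ, 0 ≤ x → 0 ≤ Dt x)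
    (hmono : ∀ x y : ℝ, 0 ≤ x → x ≤ y → Dt x ≤ Dt y)
    (hLLL : ∀ x : ℝ, 0 < x → ∀ Δ : ℝ, 1 < Δ → Dt (Δ * x) ≤ Δ ^ r * Dt x) :
    ∀ x y z : X,
      Dt (dist x z) ≤ max ((2 : ℝ) ^ (r - 1)) 1 * (Dt (dist x y) + Dt (dist y z)) :=
  logLogLipschitz_rho_metric_general hnonneg (fun x hx y _ hxy ↦ hmono x y hx hxy) hLLL
end
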